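/- arXiv:2402.18486 — 2 statements merged into one kernel-verified Lean document; each statement's English description precedes it below -/
import Mathlib

section
/- A brace B is weakly supersoluble if and only if B is supersoluble. -/
/-- A (skew left) brace: a set with an additive group structure (not necessarily abelian)
and a multiplicative group structure sharing the same identity, satisfying the skew
distributive law `a * (b + c) = a * b + -a + a * c`. -/
class SkewBrace (B : Type*) extends AddGroup B, Group B where
  one_eq_zero : (1 : B) = (0 : B)
  skew_distrib : ∀ a b c : B, a * (b + c) = a * b + -a + a * c

/-- A group is supersoluble if it has a finite chain of normal subgroups with all
factors cyclic. -/
def Group.IsSupersoluble (G : Type*) [Group G] : Prop :=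
  ∃ (n : ℕ) (H : ℕ → Subgroup G),
    H 0 = ⊥ ∧ H n = ⊤ ∧ (∀ i, (H i).Normal) ∧ (∀ i, i < n → H i ≤ H (i + 1)) ∧
    ∀ i, i < n → ∃ x ∈ H (i + 1), ∀ y ∈ H (i + 1), ∃ k : ℤ, (x ^ k)⁻¹ * y ∈ H i

namespace SkewBrace

variable {B : Type*} [SkewBrace B]

/-- `lam a b = -a + a * b`, i.e. `λ_a(b)`. -/
def lam (a b : B) : B := -a + a * b

/-- the star operation `a ∗ b = λ_a(b) - b`. -/
def starOp (a b : B) : B := lam a b + -b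

/-- the additive commutator `[a,b]_+`. -/
def addCommutator (a b : B) : B := -a + -b + a + b

/-- A subbrace of `B`: a subset that is a subgroup of both `(B,+)` and `(B,·)`. -/
structure Subbrace (B : Type*) [SkewBrace B] where
  carrier : Set B
  zero_mem : (0 : B) ∈ carrier
  add_mem : ∀ {a b : B}, a ∈ carrier → b ∈ carrier → a + b ∈ carrier
  neg_mem : ∀ {a : B}, a ∈ carrier → -a ∈ carrier
  mul_mem : ∀ {a b : B}, a ∈ carrier → b ∈ carrier → a * b ∈ carrier
  inv_mem : ∀ {a : B}, a ∈ carrier → a⁻¹ ∈ carrier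

/-- An ideal of `B`: a subbrace that is normal in `(B,+)` and in `(B,·)` and is
invariant under all the maps `λ_b`. -/
structure BraceIdeal (B : Type*) [SkewBrace B] extends Subbrace B where
  addConj_mem : ∀ (b : B) {a : B}, a ∈ carrier → b + a + -b ∈ carrier
  mulConj_mem : ∀ (b : B) {a : B}, a ∈ carrier → b * a * b⁻¹ ∈ carrier
  lam_mem : ∀ (b : B) {a : B}, a ∈ carrier → lam b a ∈ carrier

/-- The additive subgroup underlying a subbrace. -/
def Subbrace.addSubgroup (S : Subbrace B) : AddSubgroup B where
  carrier := S.carrier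
  zero_mem' := S.zero_mem
  add_mem' := S.add_mem
  neg_mem' := S.neg_mem

/-- The multiplicative subgroup underlying a subbrace. -/
def Subbrace.subgroup (S : Subbrace B) : Subgroup B where
  carrier := S.carrier
  one_mem' := by rw [one_eq_zero]; exact S.zero_mem
  mul_mem' := S.mul_mem
  inv_mem' := S.inv_mem

/-- Given ideals `J ≤ I` of `B`, `MemSocQuotRel I J x` says that the coset of `x`
lies in `Soc(I/J) = Ker(λ) ∩ Z(I/J, +)` (for `I = B` take `I = Set.univ`). -/
def MemSocQuotRel (I J : Set B) (x : B) : Prop :=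
  x ∈ I ∧ (∀ y ∈ I, -y + lam x y ∈ J) ∧ ∀ y ∈ I, -(y + x) + (x + y) ∈ J

/-- Given ideals `J ≤ I` of `B`, `MemZetaQuotRel I J x` says that the coset of `x`
lies in `ζ(I/J) = Soc(I/J) ∩ Z(I/J, ·)`. -/
def MemZetaQuotRel (I J : Set B) (x : B) : Prop :=
  MemSocQuotRel I J x ∧ ∀ y ∈ I, (y * x)⁻¹ * (x * y) ∈ J

/-- The coset of `x` lies in `Soc(B/J)`. -/
def MemSocQuot (J : Set B) (x : B) : Prop := MemSocQuotRel Set.univ J x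

/-- The coset of `x` lies in `ζ(B/J)`. -/
def MemZetaQuot (J : Set B) (x : B) : Prop := MemZetaQuotRel Set.univ J x

/-- For ideals `I ≤ J`, the additive group of the quotient `J/I` is infinite cyclic. -/
def QuotAddInfCyclic (I J : Set B) : Prop :=
  ∃ x ∈ J, (∀ y ∈ J, ∃ n : ℤ, -(n • x) + y ∈ I) ∧ ∀ n : ℤ, n • x ∈ I → n = 0

/-- For ideals `I ≤ J`, the quotient `J/I` has prime order `p`. -/
def QuotPrimeOrder (I J : Set B) (p : ℕ) : Prop :=
  p.Prime ∧ ∃ x ∈ J, x ∉ I ∧ p • x ∈ I ∧ ∀ y ∈ J, ∃ n : ℤ, -(n • x) + y ∈ I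

/-- A brace is supersoluble if it has a finite chain of ideals each factor of which
either is additively infinite cyclic and contained in the socle of the corresponding
quotient, or has prime order. -/
def IsSupersoluble (B : Type*) [SkewBrace B] : Prop :=
  ∃ (n : ℕ) (I : ℕ → BraceIdeal B),
    (I 0).carrier = {0} ∧ (I n).carrier = Set.univ ∧
    (∀ i, i < n → (I i).carrier ⊆ (I (i + 1)).carrier) ∧
    ∀ i, i < n →
      (QuotAddInfCyclic (I i).carrier (I (i + 1)).carrier ∧
        ∀ x ∈ (I (i + 1)).carrier, MemSocQuot (I i).carrier x) ∨
      ∃ p : ℕ, QuotPrimeOrder (I i).carrier (I (i + 1)).carrier p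

/-- The upper socle series of the brace (carrier of the ideal) `I`. -/
def socChainRel (I : Set B) : ℕ → Set B
  | 0 => {0}
  | n + 1 => {x | MemSocQuotRel I (socChainRel I n) x}

/-- The upper central series of the brace (carrier of the ideal) `I`. -/
def zetaChainRel (I : Set B) : ℕ → Set B
  | 0 => {0}
  | n + 1 => {x | MemZetaQuotRel I (zetaChainRel I n) x}

/-- The upper socle series `Soc_n(B)` of `B`. -/
def socChain (B : Type*) [SkewBrace B] : ℕ → Set B := socChainRel Set.univ

/-- The upper central series `ζ_n(B)` of `B`. -/
def zetaChain (B : Type*) [SkewBrace B] : ℕ → Set B := zetaChainRel Set.univ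

/-- A brace is centrally nilpotent if its upper central series reaches `B`. -/
def IsCentrallyNilpotent (B : Type*) [SkewBrace B] : Prop :=
  ∃ m : ℕ, zetaChain B m = Set.univ

end SkewBrace

namespace SkewBrace

/-- A brace is weakly supersoluble if it has a finite chain of ideals each factor of
which either is an additively central infinite cyclic subgroup of the corresponding
quotient, or has prime order. -/
def IsWeaklySupersoluble (B : Type*) [SkewBrace B] : Prop :=
  ∃ (n : ℕ) (I : ℕ → BraceIdeal B),
    (I 0).carrier = {0} ∧ (I n).carrier = Set.univ ∧
    (∀ i, i < n → (I i).carrier ⊆ (I (i + 1)).carrier) ∧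
    ∀ i, i < n →
      (QuotAddInfCyclic (I i).carrier (I (i + 1)).carrier ∧
        ∀ x ∈ (I (i + 1)).carrier, ∀ b : B, -(b + x) + (x + b) ∈ (I i).carrier) ∨
      ∃ p : ℕ, QuotPrimeOrder (I i).carrier (I (i + 1)).carrier p


section Basic

variable {B : Type*} [SkewBrace B]

theorem mul_eq_add_lam (a b : B) : a * b = a + lam a b := by
  simp [lam]

theorem lam_add (a b c : B) : lam a (b + c) = lam a b + lam a c := by
  simp [lam, skew_distrib, add_assoc]

theorem lam_mul (a b c : B) : lam (a * b) c = lam a (lam b c) := by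
  have h1 : a * (b * c) = a * b + lam a (lam b c) := by
    rw [mul_eq_add_lam b c, mul_eq_add_lam a (b + lam b c), lam_add, ← add_assoc,
      ← mul_eq_add_lam]
  rw [← mul_assoc] at h1
  rw [lam, h1]; simp

theorem lam_one (c : B) : lam 1 c = c := by
  simp [lam, one_eq_zero]

/-- the map `lam a` as an additive homomorphism -/
def lamHom (a : B) : B →+ B where
  toFun := lam a
  map_zero' := by
    have h := lam_add a 0 0
    simpa using h
  map_add' := lam_add a

theorem lam_zsmul (a : B) (n : ℤ) (b : B) : lam a (n • b) = n • lam a b :=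
  map_zsmul (lamHom a) n b

theorem lam_neg (a b : B) : lam a (-b) = - lam a b :=
  map_neg (lamHom a) b

theorem hom_int_proportional {G : Type*} [Group G] (f h : G →* Multiplicative ℤ)
    (H : ∀ x, f x = 1 → h x = 1) (x t : G) :
    (f t).toAdd * (h x).toAdd = (f x).toAdd * (h t).toAdd := by
  have h1 : f (x ^ (f t).toAdd * (t ^ (f x).toAdd)⁻¹) = 1 := by
    apply Multiplicative.toAdd.injective
    simp [mul_comm]
  have h2 := congrArg Multiplicative.toAdd (H _ h1)
  simp at h2
  linarith

theorem int_aux (τ φ : ℤ) (hτ : τ ≠ 0) (h : ∀ n : ℤ, τ + n * φ ∣ τ * τ) : φ = 0 := by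
  have h1 := h (4 * τ * τ)
  have h2 : τ * (1 + 4 * τ * φ) ∣ τ * τ := by
    convert h1 using 1; ring
  have h3 := Int.dvd_of_mul_dvd_mul_left hτ h2
  have h4 := Int.natAbs_le_of_dvd_ne_zero h3 hτ
  by_contra hφ
  have h5 : |1 + 4 * τ * φ| ≤ |τ| := by
    rw [Int.abs_eq_natAbs, Int.abs_eq_natAbs]; exact_mod_cast h4
  have h6 : |4 * τ * φ| ≤ |1 + 4 * τ * φ| + 1 := by
    have := abs_sub (1 + 4 * τ * φ) 1
    simpa using this
  rw [abs_mul, abs_mul] at h6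
  have h7 : 1 ≤ |τ| := Int.one_le_abs hτ
  have h8 : 1 ≤ |φ| := Int.one_le_abs hφ
  have h9 : |(4 : ℤ)| = 4 := rfl
  rw [h9] at h6
  nlinarith

/-- The key refinement step. -/
theorem refine_step (I J : BraceIdeal B) (hJI : J.carrier ⊆ I.carrier)
    (hcyc : QuotAddInfCyclic J.carrier I.carrier)
    (hcen : ∀ x ∈ I.carrier, ∀ b : B, -(b + x) + (x + b) ∈ J.carrier) :
    ∃ K : BraceIdeal B, J.carrier ⊆ K.carrier ∧ K.carrier ⊆ I.carrier ∧
      (QuotAddInfCyclic J.carrier K.carrier ∧ ∀ x ∈ K.carrier, MemSocQuot J.carrier x) ∧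
      QuotPrimeOrder K.carrier I.carrier 2 := by
  obtain ⟨g, hg, hgen, hinf⟩ := hcyc
  have hJconj : ∀ (b : B) {a : B}, a ∈ J.carrier → -b + a + b ∈ J.carrier := by
    intro b a ha
    simpa using J.addConj_mem (-b) ha
  have hIconj : ∀ (b : B) {a : B}, a ∈ I.carrier → -b + a + b ∈ I.carrier := by
    intro b a ha
    simpa using I.addConj_mem (-b) ha
  have hzs : ∀ (S : BraceIdeal B) (n : ℤ) {a : B}, a ∈ S.carrier → n • a ∈ S.carrier := by
    intro S n a ha
    exact S.toSubbrace.addSubgroup.zsmul_mem ha n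
  -- the coordinate
  have hex : ∀ y : B, ∃ n : ℤ, y ∈ I.carrier → -(n • g) + y ∈ J.carrier := by
    intro y
    by_cases hy : y ∈ I.carrier
    · obtain ⟨n, hn⟩ := hgen y hy
      exact ⟨n, fun _ => hn⟩
    · exact ⟨0, fun h => absurd h hy⟩
  choose ν hν using hex
  have huniq : ∀ y ∈ I.carrier, ∀ n : ℤ, -(n • g) + y ∈ J.carrier → ν y = n := by
    intro y hy n hn
    have h1 := J.add_mem hn (J.neg_mem (hν y hy))
    have h2 : (-n + ν y) • g ∈ J.carrier := by
      rw [add_zsmul, neg_zsmul]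
      simpa [add_assoc] using h1
    have := hinf _ h2
    omega
  have νadd : ∀ x ∈ I.carrier, ∀ y ∈ I.carrier, ν (x + y) = ν x + ν y := by
    intro x hx y hy
    apply huniq _ (I.add_mem hx hy)
    have h1 := hJconj (ν y • g) (hν x hx)
    have h2 := J.add_mem h1 (hν y hy)
    have e : -((ν x + ν y) • g) + (x + y)
        = -(ν y • g) + (-(ν x • g) + x) + (ν y • g) + (-(ν y • g) + y) := by
      rw [add_zsmul]; simp [add_assoc]
    rw [e]; exact h2
  have νzero : ∀ x ∈ I.carrier, (ν x = 0 ↔ x ∈ J.carrier) := by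
    intro x hx
    constructor
    · intro h
      have := hν x hx
      simpa [h] using this
    · intro h
      apply huniq _ hx
      simpa using h
  have νg : ν g = 1 := huniq g hg 1 (by simpa using J.zero_mem)
  let N : I.toSubbrace.addSubgroup →+ ℤ :=
    AddMonoidHom.mk' (fun x => ν x.1) (fun x y => νadd _ x.2 _ y.2)
  have νneg : ∀ x ∈ I.carrier, ν (-x) = - ν x := fun x hx => map_neg N ⟨x, hx⟩
  have νzsmul : ∀ (n : ℤ), ∀ x ∈ I.carrier, ν (n • x) = n * ν x := by
    intro n x hx
    have := map_zsmul N n ⟨x, hx⟩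
    simpa [N] using this
  have νconj : ∀ (b : B), ∀ x ∈ I.carrier, ν (-b + x + b) = ν x := by
    intro b x hx
    have h1 := (νzero _ (hJI (hcen x hx b))).2 (hcen x hx b)
    have e : -(b + x) + (x + b) = -x + (-b + x + b) := by simp [add_assoc]
    rw [e, νadd _ (I.neg_mem hx) _ (hIconj b hx), νneg x hx] at h1
    omega
  -- the sign
  let ε : B → ℤ := fun b => ν (lam b g)
  have νlam : ∀ (b : B), ∀ y ∈ I.carrier, ν (lam b y) = ε b * ν y := by
    intro b y hy
    have h1 := J.lam_mem b (hν y hy)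
    have h2 := (νzero _ (hJI h1)).2 h1
    rw [lam_add, lam_neg, lam_zsmul, νadd _ (I.neg_mem (hzs I _ (I.lam_mem b hg))) _
      (I.lam_mem b hy), νneg _ (hzs I _ (I.lam_mem b hg)), νzsmul _ _ (I.lam_mem b hg)] at h2
    simp only [ε]
    linarith
  have εmul : ∀ a b : B, ε (a * b) = ε a * ε b := by
    intro a b
    have h := νlam a (lam b g) (I.lam_mem b hg)
    simp only [ε] at h ⊢
    rw [lam_mul, h]
  have εone : ε 1 = 1 := by simp only [ε]; rw [lam_one, νg]
  have εcases : ∀ a, ε a = 1 ∨ ε a = -1 := by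
    intro a
    have h : ε a * ε a⁻¹ = 1 := by rw [← εmul, mul_inv_cancel, εone]
    exact Int.isUnit_iff.1 (IsUnit.of_mul_eq_one _ h)
  have εinv : ∀ a, ε a⁻¹ = ε a := by
    intro a
    have h : ε a * ε a⁻¹ = 1 := by rw [← εmul, mul_inv_cancel, εone]
    rcases εcases a with h1 | h1 <;> rw [h1] at h ⊢ <;> omega
  have νmul : ∀ x ∈ I.carrier, ∀ y ∈ I.carrier, ν (x * y) = ν x + ε x * ν y := by
    intro x hx y hy
    rw [mul_eq_add_lam, νadd x hx _ (I.lam_mem x hy), νlam x y hy]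
  have νone : ν 1 = 0 := by
    rw [one_eq_zero]; exact (νzero _ I.zero_mem).2 J.zero_mem
  have νinv : ∀ x ∈ I.carrier, ν x⁻¹ = - (ε x * ν x) := by
    intro x hx
    have h := νmul _ (I.inv_mem hx) _ hx
    rw [inv_mul_cancel, νone, εinv] at h
    omega
  -- the defect map
  have hconjm : ∀ (b : B) {x : B}, x ∈ I.carrier → b⁻¹ * x * b ∈ I.carrier := by
    intro b x hx
    simpa using I.mulConj_mem b⁻¹ hx
  have φeq : ∀ x b : B, -b + lam x b = (-b + -x + b) + lam b (b⁻¹ * x * b) := by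
    intro x b
    simp [lam, add_assoc, mul_assoc]
  have φmem : ∀ x ∈ I.carrier, ∀ b, -b + lam x b ∈ I.carrier := by
    intro x hx b
    rw [φeq]
    exact I.add_mem (hIconj b (I.neg_mem hx)) (I.lam_mem b (hconjm b hx))
  let φ : B → B → ℤ := fun x b => ν (-b + lam x b)
  have φval : ∀ x ∈ I.carrier, ∀ b, φ x b = - ν x + ε b * ν (b⁻¹ * x * b) := by
    intro x hx b
    simp only [φ]
    rw [φeq, νadd _ (hIconj b (I.neg_mem hx)) _ (I.lam_mem b (hconjm b hx)),
      νconj _ _ (I.neg_mem hx), νneg _ hx, νlam _ _ (hconjm b hx)]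
  have φJ : ∀ x ∈ J.carrier, ∀ b, φ x b = 0 := by
    intro x hx b
    have h1 : b⁻¹ * x * b ∈ J.carrier := by simpa using J.mulConj_mem b⁻¹ hx
    rw [φval x (hJI hx), (νzero _ (hJI hx)).2 hx, (νzero _ (hJI h1)).2 h1]; simp
  have φadd : ∀ x ∈ I.carrier, ∀ b c, φ x (b + c) = φ x b + φ x c := by
    intro x hx b c
    have e : -(b + c) + lam x (b + c) = (-c + (-b + lam x b) + c) + (-c + lam x c) := by
      rw [lam_add]; simp [add_assoc]
    simp only [φ]
    rw [e, νadd _ (hIconj c (φmem x hx b)) _ (φmem x hx c), νconj _ _ (φmem x hx b)]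
  have φzsmul : ∀ x ∈ I.carrier, ∀ (n : ℤ) b, φ x (n • b) = n * φ x b := by
    intro x hx n b
    have := map_zsmul (AddMonoidHom.mk' (φ x) (φadd x hx)) n b
    simpa using this
  have φmul : ∀ x ∈ I.carrier, ∀ y ∈ I.carrier, ∀ b, φ (x * y) b = φ x b + ε x * φ y b := by
    intro x hx y hy b
    have e : -b + lam (x * y) b = (-b + lam x b) + lam x (-b + lam y b) := by
      rw [lam_mul, lam_add, lam_neg]; simp [add_assoc]
    simp only [φ]
    rw [e, νadd _ (φmem x hx b) _ (I.lam_mem x (φmem y hy b)), νlam _ _ (φmem y hy b)]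
  -- `ε` depends only on `ν`
  have εJ : ∀ x ∈ J.carrier, ε x = 1 := by
    intro x hx
    have h := φJ x hx g
    simp only [φ] at h
    rw [νadd _ (I.neg_mem hg) _ (I.lam_mem x hg), νneg _ hg, νg] at h
    simp only [ε]; omega
  have εν : ∀ x ∈ I.carrier, ∀ y ∈ I.carrier, ν x = ν y → ε x = ε y := by
    intro x hx y hy h
    have h0 := νmul _ (I.inv_mem hx) _ hy
    rw [νinv x hx, εinv, ← h, neg_add_cancel] at h0
    have h1 := εJ _ ((νzero _ (I.mul_mem (I.inv_mem hx) hy)).1 h0)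
    rw [εmul, εinv] at h1
    rcases εcases x with h2 | h2 <;> rw [h2] at h1 ⊢ <;> omega
  have εeven : ∀ x ∈ I.carrier, Even (ν x) → ε x = 1 := by
    rintro x hx ⟨m, hm⟩
    have hy : m • g ∈ I.carrier := hzs I m hg
    have hy' : -(m • g) ∈ I.carrier := I.neg_mem hy
    have hνy : ν (m • g) = m := by rw [νzsmul _ _ hg, νg, mul_one]
    have hνy' : ν (-(m • g)) = -m := by rw [νneg _ hy, hνy]
    rcases εcases (m • g) with h1 | h1
    · rw [εν x hx _ (I.mul_mem hy hy) (by rw [νmul _ hy _ hy, h1, hνy]; omega), εmul, h1]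
      rfl
    · rcases εcases (-(m • g)) with h2 | h2
      · exfalso
        have h3 := εν _ (I.inv_mem hy') _ hy (by rw [νinv _ hy', h2, hνy', hνy]; omega)
        rw [εinv, h1, h2] at h3
        omega
      · rw [εν x hx _ (I.mul_mem hy hy') (by rw [νmul _ hy _ hy', h1, hνy, hνy']; omega),
          εmul, h1, h2]
        rfl
  -- the kernel of the sign on `I`
  let L : Subgroup B :=
    { carrier := {x | x ∈ I.carrier ∧ ε x = 1}
      one_mem' := ⟨by rw [one_eq_zero]; exact I.zero_mem, εone⟩
      mul_mem' := by
        rintro a b ⟨ha, ha'⟩ ⟨hb, hb'⟩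
        exact ⟨I.mul_mem ha hb, by rw [εmul, ha', hb']; rfl⟩
      inv_mem' := by
        rintro a ⟨ha, ha'⟩
        exact ⟨I.inv_mem ha, by rw [εinv, ha']⟩ }
  let f : L →* Multiplicative ℤ := MonoidHom.mk' (fun x => Multiplicative.ofAdd (ν x.1)) (by
    rintro ⟨x, hx, hx'⟩ ⟨y, hy, hy'⟩
    change Multiplicative.ofAdd (ν (x * y)) = Multiplicative.ofAdd (ν x + ν y)
    rw [νmul x hx y hy, hx', one_mul])
  let h (b : B) : L →* Multiplicative ℤ :=
    MonoidHom.mk' (fun x => Multiplicative.ofAdd (φ x.1 b)) (by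
      rintro ⟨x, hx, hx'⟩ ⟨y, hy, hy'⟩
      change Multiplicative.ofAdd (φ (x * y) b) = Multiplicative.ofAdd (φ x b + φ y b)
      rw [φmul x hx y hy, hx', one_mul])
  have hprop : ∀ b, ∀ x ∈ L, ∀ t ∈ L, ν t * φ x b = ν x * φ t b := by
    intro b x hx t ht
    have := hom_int_proportional f (h b) (by
      rintro ⟨x, hx, hx'⟩ hfx
      have h1 : ν x = 0 := congrArg Multiplicative.toAdd hfx
      exact congrArg Multiplicative.ofAdd (φJ x ((νzero x hx).1 h1) b)) ⟨x, hx⟩ ⟨t, ht⟩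
    exact this
  have hgg : g + g ∈ I.carrier := I.add_mem hg hg
  have hνgg : ν (g + g) = 2 := by rw [νadd _ hg _ hg, νg]; rfl
  have htL : g + g ∈ L := ⟨hgg, εeven _ hgg (by rw [hνgg]; exact even_two)⟩
  have hdvd : ∀ b, (2 : ℤ) + φ (g + g) b ∣ 2 * 2 := by
    intro b
    have hxI : b * (g + g) * b⁻¹ ∈ I.carrier := I.mulConj_mem b hgg
    have hxL : b * (g + g) * b⁻¹ ∈ L := by
      refine ⟨hxI, ?_⟩
      rw [εmul, εmul, εinv, htL.2]
      rcases εcases b with h1 | h1 <;> rw [h1] <;> rfl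
    have h1 := φval _ hxI b
    have e : b⁻¹ * (b * (g + g) * b⁻¹) * b = g + g := by group
    rw [e, hνgg] at h1
    have h2 := hprop b _ hxL _ htL
    rw [hνgg] at h2
    have h3 : ν (b * (g + g) * b⁻¹) * (2 + φ (g + g) b) = ε b * (2 * 2) := by
      rw [h1] at h2
      linarith
    have h4 : (2 + φ (g + g) b) ∣ ε b * (2 * 2) := ⟨_, by rw [← h3, mul_comm]⟩
    rcases εcases b with h5 | h5 <;> rw [h5] at h4
    · simpa using h4
    · simpa using h4
  have hφt : ∀ b, φ (g + g) b = 0 := by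
    intro b
    apply int_aux 2 _ (by norm_num)
    intro n
    rw [← φzsmul _ hgg]
    exact hdvd _
  have hφL : ∀ x ∈ L, ∀ b, φ x b = 0 := by
    intro x hx b
    have := hprop b x hx _ htL
    rw [hνgg, hφt] at this
    omega
  have hφK : ∀ x ∈ I.carrier, Even (ν x) → ∀ b, φ x b = 0 := fun x hx he b =>
    hφL x ⟨hx, εeven x hx he⟩ b
  let K : BraceIdeal B :=
    { carrier := {x | x ∈ I.carrier ∧ Even (ν x)}
      zero_mem := ⟨I.zero_mem, by rw [(νzero _ I.zero_mem).2 J.zero_mem]; exact Even.zero⟩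
      add_mem := by
        rintro a b ⟨ha, ha'⟩ ⟨hb, hb'⟩
        exact ⟨I.add_mem ha hb, by rw [νadd a ha b hb]; exact ha'.add hb'⟩
      neg_mem := by
        rintro a ⟨ha, ha'⟩
        exact ⟨I.neg_mem ha, by rw [νneg a ha]; exact ha'.neg⟩
      mul_mem := by
        rintro a b ⟨ha, ha'⟩ ⟨hb, hb'⟩
        exact ⟨I.mul_mem ha hb, by rw [νmul a ha b hb]; exact ha'.add (hb'.mul_left _)⟩
      inv_mem := by
        rintro a ⟨ha, ha'⟩
        exact ⟨I.inv_mem ha, by rw [νinv a ha]; exact (ha'.mul_left _).neg⟩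
      addConj_mem := by
        rintro b a ⟨ha, ha'⟩
        refine ⟨I.addConj_mem b ha, ?_⟩
        have := νconj (-b) a ha
        rw [neg_neg] at this
        rw [this]; exact ha'
      mulConj_mem := by
        rintro b a ⟨ha, ha'⟩
        refine ⟨I.mulConj_mem b ha, ?_⟩
        have h1 := φval a ha b⁻¹
        rw [hφK a ha ha', inv_inv] at h1
        rcases εcases b⁻¹ with h2 | h2 <;> rw [h2] at h1
        · have : ν (b * a * b⁻¹) = ν a := by omega
          rw [this]; exact ha'
        · have : ν (b * a * b⁻¹) = - ν a := by omega
          rw [this]; exact ha'.neg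
      lam_mem := by
        rintro b a ⟨ha, ha'⟩
        exact ⟨I.lam_mem b ha, by rw [νlam b a ha]; exact ha'.mul_left _⟩ }
  refine ⟨K, ?_, fun x hx => hx.1, ⟨⟨g + g, ⟨hgg, by rw [hνgg]; exact even_two⟩, ?_, ?_⟩, ?_⟩,
    Nat.prime_two, g, hg, ?_, ⟨?_, ?_⟩, ?_⟩
  · intro x hx
    exact ⟨hJI hx, by rw [(νzero _ (hJI hx)).2 hx]; exact Even.zero⟩
  · rintro y ⟨hy, m, hm⟩
    refine ⟨m, ?_⟩
    have hm' : m • (g + g) ∈ I.carrier := hzs I m hgg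
    rw [← νzero _ (I.add_mem (I.neg_mem hm') hy), νadd _ (I.neg_mem hm') _ hy, νneg _ hm',
      νzsmul _ _ hgg, hνgg, hm]
    ring
  · intro n hn
    have h1 := (νzero _ (hJI hn)).2 hn
    rw [νzsmul _ _ hgg, hνgg] at h1
    omega
  · rintro x ⟨hx, hx'⟩
    refine ⟨Set.mem_univ _, ?_, fun y _ => hcen x hx y⟩
    intro y _
    exact (νzero _ (φmem x hx y)).1 (hφK x hx hx' y)
  · rintro ⟨_, h1⟩
    rw [νg] at h1
    exact absurd h1 (by decide)
  · rw [two_nsmul]; exact hgg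
  · rw [two_nsmul, hνgg]; exact even_two
  · intro y hy
    obtain ⟨n, hn⟩ := hgen y hy
    exact ⟨n, hJI hn, by rw [(νzero _ (hJI hn)).2 hn]; exact Even.zero⟩

/-- The relation between consecutive members of a supersoluble chain. -/
def SStep (J I : BraceIdeal B) : Prop :=
  J.carrier ⊆ I.carrier ∧
    ((QuotAddInfCyclic J.carrier I.carrier ∧ ∀ x ∈ I.carrier, MemSocQuot J.carrier x) ∨
      ∃ p : ℕ, QuotPrimeOrder J.carrier I.carrier p)

/-- `J` is the end of a supersoluble chain. -/
def SReach (J : BraceIdeal B) : Prop :=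
  ∃ (n : ℕ) (I : ℕ → BraceIdeal B), (I 0).carrier = {0} ∧ I n = J ∧
    ∀ i, i < n → SStep (I i) (I (i + 1))

theorem SReach.step {J K : BraceIdeal B} (h : SReach J) (hs : SStep J K) : SReach K := by
  obtain ⟨n, I, h0, hn, hst⟩ := h
  refine ⟨n + 1, fun k => if k ≤ n then I k else K, by simpa using h0, by simp, ?_⟩
  intro i hi
  rcases Nat.lt_succ_iff_lt_or_eq.1 hi with h1 | h1
  · have e1 : i ≤ n := h1.le
    have e2 : i + 1 ≤ n := h1
    simp only [e1, e2, if_true]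
    exact hst i h1
  · subst h1
    simp [hn, hs]

end Basic

/-- A brace is weakly supersoluble if and only if it is supersoluble. -/
theorem weaklySupersoluble_iff_supersoluble (B : Type*) [SkewBrace B] :
    IsWeaklySupersoluble B ↔ IsSupersoluble B := by
  constructor
  · rintro ⟨n, I, h0, hn, hle, hst⟩
    have key : ∀ i, i ≤ n → SReach (I i) := by
      intro i
      induction i with
      | zero => intro _; exact ⟨0, I, h0, rfl, fun i hi => absurd hi (Nat.not_lt_zero i)⟩
      | succ i ih =>
        intro hi
        have hr := ih (by omega)
        rcases hst i hi with ⟨hc, hz⟩ | hp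
        · obtain ⟨K, h1, h2, h3, h4⟩ := refine_step (I (i + 1)) (I i) (hle i hi) hc hz
          exact (hr.step ⟨h1, Or.inl h3⟩).step ⟨h2, Or.inr ⟨2, h4⟩⟩
        · exact hr.step ⟨hle i hi, Or.inr hp⟩
    obtain ⟨m, I', h0', hm, hs⟩ := key n le_rfl
    exact ⟨m, I', h0', by rw [hm, hn], fun i hi => (hs i hi).1, fun i hi => (hs i hi).2⟩
  · rintro ⟨n, I, h0, hn, hle, hst⟩
    refine ⟨n, I, h0, hn, hle, fun i hi => ?_⟩
    rcases hst i hi with ⟨hc, hz⟩ | hp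
    · exact Or.inl ⟨hc, fun x hx b => (hz x hx).2.2 b (Set.mem_univ b)⟩
    · exact Or.inr hp

end SkewBrace
end

section
/- Let B be a brace with B = Soc_n(B) for some n ∈ ℕ. If the multiplicative group (B,·) is supersoluble, then B is a supersoluble brace. -/
namespace SkewBrace

section Aux

variable {B : Type*} [SkewBrace B]

theorem lam_zero (a : B) : lam a 0 = 0 := by
  have := lam_add a 0 0
  simpa using this

theorem lam_inv_right (a c : B) : lam a (lam a⁻¹ c) = c := by
  rw [← lam_mul, mul_inv_cancel, lam_one]

theorem lam_self_inv (a : B) : lam a a⁻¹ = -a := by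
  simp [lam, one_eq_zero]

theorem lam_inv_mul (a b : B) : lam a (a⁻¹ * b) = -a + b := by
  simp [lam]

theorem lam_inv_neg_add (a b : B) : lam a⁻¹ (-a + b) = a⁻¹ * b := by
  rw [← lam_inv_mul, ← lam_mul, inv_mul_cancel, lam_one]

theorem BraceIdeal.ext' {I J : BraceIdeal B} (h : I.carrier = J.carrier) : I = J := by
  obtain ⟨⟨c, _, _, _, _, _⟩, _, _, _⟩ := I
  obtain ⟨⟨d, _, _, _, _, _⟩, _, _, _⟩ := J
  simp only at h
  subst h
  rfl

theorem BraceIdeal.neg_add_mem_iff (I : BraceIdeal B) (a b : B) :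
    -a + b ∈ I.carrier ↔ a⁻¹ * b ∈ I.carrier := by
  constructor
  · intro h
    rw [← lam_inv_neg_add]
    exact I.lam_mem _ h
  · intro h
    rw [← lam_inv_mul]
    exact I.lam_mem _ h

theorem BraceIdeal.normal (I : BraceIdeal B) : I.subgroup.Normal :=
  ⟨fun _ ha b => I.mulConj_mem b ha⟩

theorem BraceIdeal.addNormal (I : BraceIdeal B) : I.addSubgroup.Normal :=
  ⟨fun _ ha b => I.addConj_mem b ha⟩

/-- additive congruence modulo an ideal -/
def BraceIdeal.q (I : BraceIdeal B) : B → B ⧸ I.addSubgroup := QuotientAddGroup.mk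

theorem BraceIdeal.q_eq (I : BraceIdeal B) (a b : B) : I.q a = I.q b ↔ -a + b ∈ I.carrier :=
  QuotientAddGroup.eq

theorem BraceIdeal.q_lam (I : BraceIdeal B) (c : B) {a b : B} (h : I.q a = I.q b) :
    I.q (lam c a) = I.q (lam c b) := by
  rw [I.q_eq] at h ⊢
  rw [← lam_neg, ← lam_add]
  exact I.lam_mem _ h

theorem memSocQuot_iff_q (I : BraceIdeal B) (x : B) : MemSocQuot I.carrier x ↔
    (∀ y, I.q (lam x y) = I.q y) ∧ ∀ y, I.q (x + y) = I.q (y + x) := by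
  constructor
  · rintro ⟨-, h1, h2⟩
    exact ⟨fun y => ((I.q_eq _ _).2 (h1 y trivial)).symm,
      fun y => ((I.q_eq _ _).2 (h2 y trivial)).symm⟩
  · rintro ⟨h1, h2⟩
    exact ⟨trivial, fun y _ => (I.q_eq _ _).1 (h1 y).symm,
      fun y _ => (I.q_eq _ _).1 (h2 y).symm⟩

theorem memSocQuot_mono {I J : Set B} (h : I ⊆ J) {x : B} (hx : MemSocQuot I x) :
    MemSocQuot J x :=
  ⟨trivial, fun y hy => h (hx.2.1 y hy), fun y hy => h (hx.2.2 y hy)⟩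

/-- A normal multiplicative subgroup between `S` and `Soc(B/S)` is an ideal. -/
def idealOf (S : BraceIdeal B) (N : Subgroup B) (hN : N.Normal) (hSN : S.carrier ⊆ N)
    (hsoc : ∀ x ∈ N, MemSocQuot S.carrier x) : BraceIdeal B :=
  have hadd : ∀ n ∈ N, ∀ s ∈ S.carrier, n + s ∈ N := fun n hn s hs => by
    have : n + s = n * lam n⁻¹ s := by rw [mul_eq_add_lam, lam_inv_right]
    rw [this]
    exact N.mul_mem hn (hSN (S.lam_mem _ hs))
  have hmul : ∀ x ∈ N, ∀ y, ∃ s ∈ S.carrier, x * y = x + y + s := fun x hx y =>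
    ⟨_, (hsoc x hx).2.1 y trivial, by rw [mul_eq_add_lam]; simp [add_assoc]⟩
  have hconj : ∀ (b a : B), a ∈ N → b + a + -b ∈ N := fun b a ha => by
    have h1 := S.addConj_mem b (S.neg_mem ((hsoc a ha).2.2 b trivial))
    have := hadd a ha _ h1
    have e : b + a + -b = a + (b + -(-(b + a) + (a + b)) + -b) := by
      simp [add_assoc]
    rw [e]; exact this
  { carrier := N
    zero_mem := by rw [← one_eq_zero]; exact N.one_mem
    add_mem := by
      intro a b ha hb
      obtain ⟨s, hs, h⟩ := hmul a ha b
      have : a + b = a * b + -s := by rw [h]; simp [add_assoc]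
      rw [this]
      exact hadd _ (N.mul_mem ha hb) _ (S.neg_mem hs)
    neg_mem := by
      intro a ha
      obtain ⟨s, hs, h⟩ := hmul a ha (-a)
      rw [add_neg_cancel, zero_add] at h
      have : -a = a⁻¹ * s := by rw [← h]; simp
      rw [this]
      exact N.mul_mem (N.inv_mem ha) (hSN hs)
    mul_mem := N.mul_mem
    inv_mem := N.inv_mem
    addConj_mem := fun b {a} ha => hconj b a ha
    mulConj_mem := fun b {a} ha => hN.conj_mem a ha b
    lam_mem := by
      intro b a ha
      have hc := hN.conj_mem a ha b
      obtain ⟨s, hs, h⟩ := hmul _ hc b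
      have e : lam b a = -b + (b * a * b⁻¹) + -(-b) + s := by
        rw [lam, neg_neg, add_assoc, add_assoc, ← add_assoc _ b s, ← h]; simp
      rw [e]
      exact hadd _ (hconj _ _ hc) _ hs }

theorem idealOf_carrier (S : BraceIdeal B) (N : Subgroup B) (hN : N.Normal)
    (hSN : S.carrier ⊆ N) (hsoc : ∀ x ∈ N, MemSocQuot S.carrier x) :
    (idealOf S N hN hSN hsoc).carrier = N := rfl

theorem BraceIdeal.q_add (I : BraceIdeal B) {a b c d : B} (h : I.q a = I.q c)
    (h' : I.q b = I.q d) : I.q (a + b) = I.q (c + d) := by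
  haveI := I.addNormal
  change ((a + b : B) : B ⧸ I.addSubgroup) = ((c + d : B) : B ⧸ I.addSubgroup)
  rw [QuotientAddGroup.mk_add, QuotientAddGroup.mk_add]
  change I.q a + I.q b = I.q c + I.q d
  rw [h, h']

/-- multiplicative group of `Soc(B/J)` -/
def socSubgroup (J : BraceIdeal B) : Subgroup B where
  carrier := {x | MemSocQuot J.carrier x}
  one_mem' := by
    rw [Set.mem_setOf_eq, memSocQuot_iff_q]
    refine ⟨fun y => by rw [lam_one], fun y => by rw [one_eq_zero]; simp⟩
  mul_mem' := by
    intro a b ha hb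
    rw [Set.mem_setOf_eq, memSocQuot_iff_q] at *
    refine ⟨fun y => by rw [lam_mul, ha.1, hb.1], fun y => ?_⟩
    have h : J.q (a * b) = J.q (a + b) := by
      rw [mul_eq_add_lam]; exact J.q_add rfl (ha.1 b)
    calc J.q (a * b + y) = J.q (a + b + y) := J.q_add h rfl
      _ = J.q (a + (b + y)) := by rw [add_assoc]
      _ = J.q (a + (y + b)) := J.q_add rfl (hb.2 y)
      _ = J.q (a + y + b) := by rw [add_assoc]
      _ = J.q (y + a + b) := J.q_add (ha.2 y) rfl
      _ = J.q (y + (a + b)) := by rw [add_assoc]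
      _ = J.q (y + a * b) := J.q_add rfl h.symm
  inv_mem' := by
    intro a ha
    rw [Set.mem_setOf_eq, memSocQuot_iff_q] at *
    refine ⟨fun y => by rw [← ha.1 (lam a⁻¹ y), lam_inv_right], fun y => ?_⟩
    have h : J.q a⁻¹ = J.q (-a) := by
      rw [← ha.1 a⁻¹, lam_self_inv]
    calc J.q (a⁻¹ + y) = J.q (-a + y) := J.q_add h rfl
      _ = J.q (-a + ((y + a) + -a)) := by simp [add_assoc]
      _ = J.q (-a + ((a + y) + -a)) := J.q_add rfl (J.q_add (ha.2 y).symm rfl)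
      _ = J.q (y + -a) := by simp [add_assoc]
      _ = J.q (y + a⁻¹) := J.q_add rfl h.symm

theorem socSubgroup_normal (J : BraceIdeal B) : (socSubgroup J).Normal := by
  constructor
  intro x hx b
  change MemSocQuot _ _ at hx
  change MemSocQuot _ _
  rw [memSocQuot_iff_q] at *
  have hc : ∀ y, J.q (lam b x + y) = J.q (y + lam b x) := fun y => by
    have := J.q_lam b (hx.2 (lam b⁻¹ y))
    rwa [lam_add, lam_add, lam_inv_right] at this
  have h : J.q (b * x * b⁻¹) = J.q (lam b x) := by
    calc J.q (b * x * b⁻¹) = J.q (b + lam b x + lam b (lam x b⁻¹)) := by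
          rw [mul_eq_add_lam (b * x), lam_mul, mul_eq_add_lam b x]
      _ = J.q (b + lam b x + lam b b⁻¹) := J.q_add rfl (J.q_lam b (hx.1 _))
      _ = J.q (b + lam b x + -b) := by rw [lam_self_inv]
      _ = J.q (lam b x + b + -b) := J.q_add (hc b).symm rfl
      _ = J.q (lam b x) := by simp [add_assoc]
  refine ⟨fun y => ?_, fun y => ?_⟩
  · rw [lam_mul, lam_mul]
    rw [J.q_lam b (hx.1 _), lam_inv_right]
  · rw [J.q_add h rfl, hc, J.q_add rfl h.symm]

theorem le_socSubgroup (J : BraceIdeal B) : J.carrier ⊆ socSubgroup J := by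
  intro j hj
  change MemSocQuot _ _
  rw [memSocQuot_iff_q]
  have h0 : J.q j = J.q 0 := by
    rw [J.q_eq, add_zero]; exact J.neg_mem hj
  constructor
  · intro y
    have h1 : J.q (j * y) = J.q y := by
      rw [eq_comm, J.q_eq, J.neg_add_mem_iff]
      have := J.mulConj_mem y⁻¹ hj
      rwa [inv_inv, mul_assoc] at this
    have h2 : J.q (-j) = J.q 0 := by
      rw [J.q_eq, neg_neg, add_zero]; exact hj
    rw [lam, J.q_add h2 h1, zero_add]
  · intro y
    rw [J.q_add h0 rfl, J.q_add rfl h0]; simp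

/-- `Soc(B/J)` as ideal -/
def socIdeal (J : BraceIdeal B) : BraceIdeal B :=
  idealOf J (socSubgroup J) (socSubgroup_normal J) (le_socSubgroup J) (fun _ h => h)

/-- zero ideal -/
def botIdeal (B : Type*) [SkewBrace B] : BraceIdeal B where
  carrier := {0}
  zero_mem := rfl
  add_mem := by rintro _ _ rfl rfl; simp
  neg_mem := by rintro _ rfl; simp
  mul_mem := by
    rintro _ _ rfl rfl
    rw [← one_eq_zero]; simp
  inv_mem := by
    rintro _ rfl
    rw [← one_eq_zero]; simp
  addConj_mem := by rintro b _ rfl; simp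
  mulConj_mem := by
    rintro b _ rfl
    rw [← one_eq_zero]; simp
  lam_mem := by rintro b _ rfl; exact lam_zero b

/-- socle series as ideals -/
def socI (B : Type*) [SkewBrace B] : ℕ → BraceIdeal B
  | 0 => botIdeal B
  | n + 1 => socIdeal (socI B n)

theorem socI_carrier (n : ℕ) : (socI B n).carrier = socChain B n := by
  induction n with
  | zero => rfl
  | succ n ih =>
    change {x | MemSocQuot (socI B n).carrier x} = _
    rw [ih]; rfl

/-- one admissible step -/
def Step (I J : BraceIdeal B) : Prop :=
  I.carrier ⊆ J.carrier ∧
    ((QuotAddInfCyclic I.carrier J.carrier ∧ ∀ x ∈ J.carrier, MemSocQuot I.carrier x) ∨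
      ∃ p : ℕ, QuotPrimeOrder I.carrier J.carrier p)

theorem exists_chain {I J : BraceIdeal B} (h : Relation.ReflTransGen Step I J) :
    ∃ (n : ℕ) (F : ℕ → BraceIdeal B), F 0 = I ∧ F n = J ∧ ∀ i, i < n → Step (F i) (F (i + 1)) := by
  induction h with
  | refl => exact ⟨0, fun _ => I, rfl, rfl, fun i hi => absurd hi (Nat.not_lt_zero i)⟩
  | @tail K L _ hs ih =>
    obtain ⟨n, F, h0, hn, hF⟩ := ih
    refine ⟨n + 1, fun i => if i ≤ n then F i else L, by simp [h0], by simp, ?_⟩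
    intro i hi
    rcases Nat.lt_or_ge i n with h | h
    · have h1 : i ≤ n := h.le
      have h2 : i + 1 ≤ n := h
      simp only [h1, h2, if_true]
      exact hF i h
    · obtain rfl : i = n := by omega
      simp [hn, hs]

/-- cyclic factor -/
def CycFac {G : Type*} [Group G] (M N : Subgroup G) : Prop :=
  ∃ x ∈ N, ∀ y ∈ N, ∃ k : ℤ, (x ^ k)⁻¹ * y ∈ M

theorem CycFac.sup {G : Type*} [Group G] {M N : Subgroup G} (h : CycFac M N) (C : Subgroup G)
    [C.Normal] : CycFac (C ⊔ M) (C ⊔ N) := by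
  obtain ⟨x, hx, h⟩ := h
  refine ⟨x, Subgroup.mem_sup_right hx, fun y hy => ?_⟩
  rw [Subgroup.mem_sup_of_normal_left] at hy
  obtain ⟨c, hc, b, hb, rfl⟩ := hy
  obtain ⟨k, hk⟩ := h b hb
  refine ⟨k, ?_⟩
  have e : (x ^ k)⁻¹ * (c * b) = ((x ^ k)⁻¹ * c * ((x ^ k)⁻¹)⁻¹) * ((x ^ k)⁻¹ * b) := by group
  rw [e]
  exact Subgroup.mul_mem_sup (Subgroup.Normal.conj_mem inferInstance c hc _) hk

theorem CycFac.inf {G : Type*} [Group G] {M N : Subgroup G} [M.Normal] (h : CycFac M N)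
    (C : Subgroup G) : CycFac (C ⊓ M) (C ⊓ N) := by
  obtain ⟨x, hx, h⟩ := h
  have hle : (C ⊓ N).map (QuotientGroup.mk' M) ≤ Subgroup.zpowers (QuotientGroup.mk' M x) := by
    rintro _ ⟨y, hy, rfl⟩
    obtain ⟨k, hk⟩ := h y hy.2
    refine ⟨k, ?_⟩
    change (QuotientGroup.mk' M x) ^ k = _
    rw [← map_zpow]
    exact QuotientGroup.eq.2 hk
  have hcyc : IsCyclic ((C ⊓ N).map (QuotientGroup.mk' M)) := Subgroup.isCyclic_of_le hle
  obtain ⟨⟨_, z, hz, rfl⟩, hg⟩ := hcyc.exists_generator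
  refine ⟨z, hz, fun y hy => ?_⟩
  obtain ⟨k, hk⟩ := hg ⟨_, y, hy, rfl⟩
  refine ⟨k, C.mul_mem (C.inv_mem (C.zpow_mem hz.1 k)) hy.1, ?_⟩
  have := congrArg Subtype.val hk
  simp only [Subgroup.coe_zpow] at this
  rw [← map_zpow] at this
  exact QuotientGroup.eq.1 this

theorem zsmul_mem_iff (S I : BraceIdeal B) (hSI : S.carrier ⊆ I.carrier) (x : B)
    (hx : MemSocQuot S.carrier x) (y : B) (n : ℤ) :
    (-(n • x) + y ∈ I.carrier ↔ (x ^ n)⁻¹ * y ∈ I.carrier) := by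
  have key : ∀ n : ℕ, S.q (n • x) = S.q (x ^ n) := by
    intro n
    induction n with
    | zero => rw [zero_smul, pow_zero, one_eq_zero]
    | succ n ih =>
      rw [succ_nsmul', pow_succ', mul_eq_add_lam]
      exact S.q_add rfl (ih.trans (((memSocQuot_iff_q S x).1 hx).1 _).symm)
  have key2 : S.q (n • x) = S.q (x ^ n) := by
    obtain ⟨m, rfl | rfl⟩ := n.eq_nat_or_neg
    · simpa using key m
    · rw [neg_zsmul, zpow_neg, natCast_zsmul, zpow_natCast]
      have h1 : MemSocQuot S.carrier (x ^ m) := (socSubgroup S).pow_mem hx m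
      have h2 := ((memSocQuot_iff_q S _).1 h1).1 (x ^ m)⁻¹
      rw [lam_self_inv] at h2
      rw [← h2]
      have h3 := key m
      rw [S.q_eq] at h3 ⊢
      have := S.neg_mem (S.addConj_mem (m • x) h3)
      simpa [add_assoc] using this
  have key3 : I.q (n • x) = I.q (x ^ n) := by
    rw [I.q_eq]; rw [S.q_eq] at key2; exact hSI key2
  rw [← I.neg_add_mem_iff, ← I.q_eq, ← I.q_eq, key3]

theorem reach_finite (S : BraceIdeal B) (N : Subgroup B) (hN : N.Normal)
    (hsocN : ∀ x ∈ N, MemSocQuot S.carrier x) (k : ℕ) :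
    ∀ (M : Subgroup B) (hM : M.Normal) (hSM : S.carrier ⊆ M) (hMN : M ≤ N) (x : B), 0 < k →
      x ∈ N → x ^ k ∈ M → (∀ y ∈ N, ∃ k : ℤ, (x ^ k)⁻¹ * y ∈ M) →
    Relation.ReflTransGen Step (idealOf S M hM hSM fun x hx => hsocN x (hMN hx))
      (idealOf S N hN (hSM.trans hMN) hsocN) := by
  induction k using Nat.strong_induction_on generalizing N with
  | _ k ih =>
  intro M hM hSM hMN x hk hx hxk hgen
  by_cases hk1 : k = 1
  · subst hk1
    have : M = N := by
      apply le_antisymm hMN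
      intro y hy
      obtain ⟨j, hj⟩ := hgen y hy
      rw [pow_one] at hxk
      have := M.mul_mem (M.zpow_mem hxk j) hj
      simpa using this
    subst this
    exact Relation.ReflTransGen.refl
  · obtain ⟨p, hp, m, rfl⟩ := Nat.exists_prime_and_dvd hk1
    have hm : 0 < m := Nat.pos_of_mul_pos_left hk
    let g := QuotientGroup.mk' M x
    let M' : Subgroup B := (Subgroup.zpowers (g ^ p)).comap (QuotientGroup.mk' M)
    have hmem : ∀ y, y ∈ M' ↔ ∃ j : ℤ, ((x ^ p) ^ j)⁻¹ * y ∈ M := by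
      intro y
      constructor
      · rintro ⟨j, hj⟩
        refine ⟨j, QuotientGroup.eq.1 ?_⟩
        exact hj
      · rintro ⟨j, hj⟩
        exact ⟨j, QuotientGroup.eq.2 hj⟩
    have hMM' : M ≤ M' := fun y hy => (hmem y).2 ⟨0, by simpa using hy⟩
    have hxp : x ^ p ∈ M' := (hmem _).2 ⟨1, by simp [M.one_mem]⟩
    have hM'N : M' ≤ N := by
      intro y hy
      obtain ⟨j, hj⟩ := (hmem y).1 hy
      have := N.mul_mem (N.zpow_mem (N.pow_mem hx p) j) (hMN hj)
      simpa using this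
    have hM'n : M'.Normal := by
      have : (Subgroup.zpowers (g ^ p)).Normal := by
        constructor
        rintro _ ⟨j, rfl⟩ b
        obtain ⟨b, rfl⟩ := QuotientGroup.mk'_surjective M b
        obtain ⟨i, hi⟩ := hgen _ (hN.conj_mem x hx b)
        have hi' : g ^ i = QuotientGroup.mk' M b * g * (QuotientGroup.mk' M b)⁻¹ :=
          QuotientGroup.eq.2 hi
        change _ * (g ^ p) ^ j * _ ∈ _
        refine ⟨i * j, ?_⟩
        change (g ^ p) ^ (i * j) = _
        rw [← conj_zpow, ← conj_pow, ← hi', ← zpow_natCast, ← zpow_natCast, ← zpow_mul,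
          ← zpow_mul, ← zpow_mul]
        congr 1; ring
      exact this.comap _
    have hr1 := ih m (by
      have := hp.two_le
      nlinarith) M' hM'n (fun y hy => hsocN y (hM'N hy)) M hM hSM hMM' (x ^ p) hm hxp
      (by rwa [← pow_mul]) (fun y hy => (hmem y).1 hy)
    refine hr1.trans ?_
    by_cases hxM : x ∈ M'
    · have : M' = N := by
        apply le_antisymm hM'N
        intro y hy
        obtain ⟨j, hj⟩ := hgen y hy
        have := M'.mul_mem (M'.zpow_mem hxM j) (hMM' hj)
        simpa using this
      subst this
      exact Relation.ReflTransGen.refl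
    · apply Relation.ReflTransGen.single
      have hS' : S.carrier ⊆ M' := hSM.trans hMM'
      have hz := zsmul_mem_iff S (idealOf S M' hM'n hS' fun x hx => hsocN x (hM'N hx)) hS' x
        (hsocN x hx)
      refine ⟨hM'N, Or.inr ⟨p, hp, x, hx, hxM, ?_, fun y hy => ?_⟩⟩
      · have h1 := (hz 0 p).2 (by
          rw [zpow_natCast, ← one_eq_zero, mul_one]
          exact M'.inv_mem hxp)
        rw [add_zero, natCast_zsmul] at h1
        have := Subbrace.neg_mem _ h1
        rwa [neg_neg] at this
      · obtain ⟨j, hj⟩ := hgen y hy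
        exact ⟨j, (hz y j).2 (hMM' hj)⟩

theorem reach_cyc (S : BraceIdeal B) (N : Subgroup B) (hN : N.Normal)
    (hsocN : ∀ x ∈ N, MemSocQuot S.carrier x)
    (M : Subgroup B) (hM : M.Normal) (hSM : S.carrier ⊆ M) (hMN : M ≤ N) (hc : CycFac M N) :
    Relation.ReflTransGen Step (idealOf S M hM hSM fun x hx => hsocN x (hMN hx))
      (idealOf S N hN (hSM.trans hMN) hsocN) := by
  obtain ⟨x, hx, hgen⟩ := hc
  by_cases h : ∃ k : ℕ, 0 < k ∧ x ^ k ∈ M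
  · obtain ⟨k, hk, hxk⟩ := h
    exact reach_finite S N hN hsocN k M hM hSM hMN x hk hx hxk hgen
  · have hz := zsmul_mem_iff S (idealOf S M hM hSM fun x hx => hsocN x (hMN hx)) hSM x
        (hsocN x hx)
    apply Relation.ReflTransGen.single
    refine ⟨hMN, Or.inl ⟨⟨x, hx, fun y hy => ?_, fun n hn => ?_⟩, fun y hy => ?_⟩⟩
    · obtain ⟨j, hj⟩ := hgen y hy
      exact ⟨j, (hz y j).2 hj⟩
    · have h1 := (hz 0 n).1 (by rw [add_zero]; exact Subbrace.neg_mem _ hn)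
      rw [← one_eq_zero, mul_one] at h1
      have h2 : x ^ n ∈ M := by
        have := M.inv_mem h1
        rwa [inv_inv] at this
      by_contra hne
      refine h ⟨n.natAbs, Int.natAbs_pos.2 hne, ?_⟩
      rcases Int.natAbs_eq n with e | e
      · rw [e, zpow_natCast] at h2; exact h2
      · rw [e, zpow_neg, zpow_natCast] at h2
        have := M.inv_mem h2
        rwa [inv_inv] at this
    · exact memSocQuot_mono hSM (hsocN y hy)

theorem reach_soc (hmul : Group.IsSupersoluble B) (S : BraceIdeal B) :
    Relation.ReflTransGen Step S (socIdeal S) := by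
  obtain ⟨n, H, h0, hn, hnorm, hle, hcyc⟩ := hmul
  haveI := S.normal
  haveI := socSubgroup_normal S
  let M : ℕ → Subgroup B := fun i => socSubgroup S ⊓ (S.subgroup ⊔ H i)
  have hMn : ∀ i, (M i).Normal := fun i => by
    haveI := hnorm i
    exact inferInstance
  have hSM : ∀ i, S.carrier ⊆ M i := fun i x hx =>
    ⟨le_socSubgroup S hx, Subgroup.mem_sup_left (show x ∈ S.subgroup from hx)⟩
  have hs : ∀ i, ∀ x ∈ M i, MemSocQuot S.carrier x := fun i x hx => hx.1
  have main : ∀ i, i ≤ n → Relation.ReflTransGen Step (idealOf S (M 0) (hMn 0) (hSM 0) (hs 0))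
      (idealOf S (M i) (hMn i) (hSM i) (hs i)) := by
    intro i
    induction i with
    | zero => intro _; exact Relation.ReflTransGen.refl
    | succ i ih =>
      intro hi
      refine (ih (by omega)).trans ?_
      have hc : CycFac (H i) (H (i + 1)) := hcyc i hi
      haveI := hnorm i
      exact reach_cyc S (M (i + 1)) (hMn _) (hs _) (M i) (hMn i) (hSM i)
        (inf_le_inf_left _ (sup_le_sup_left (hle i hi) _)) ((hc.sup S.subgroup).inf _)
  have hfin := main n le_rfl
  have e0 : idealOf S (M 0) (hMn 0) (hSM 0) (hs 0) = S := by
    apply BraceIdeal.ext'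
    apply Set.Subset.antisymm _ (hSM 0)
    rintro x ⟨-, hx⟩
    rw [h0, sup_bot_eq] at hx
    exact hx
  have en : idealOf S (M n) (hMn n) (hSM n) (hs n) = socIdeal S := by
    apply BraceIdeal.ext'
    apply Set.Subset.antisymm
    · rintro x ⟨hx, -⟩
      exact hx
    · intro x hx
      refine ⟨hx, ?_⟩
      rw [hn, sup_top_eq]
      trivial
  rwa [e0, en] at hfin

end Aux

/-- If `B = Soc_n(B)` for some `n` and the multiplicative group `(B,·)` is
supersoluble, then the brace `B` is supersoluble. -/
theorem isSupersoluble_of_socChain_of_mul_supersoluble (B : Type*) [SkewBrace B]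
    (n : ℕ) (hsoc : socChain B n = Set.univ) (hmul : Group.IsSupersoluble B) :
    IsSupersoluble B := by
  have h : ∀ m, Relation.ReflTransGen Step (socI B 0) (socI B m) := by
    intro m
    induction m with
    | zero => exact Relation.ReflTransGen.refl
    | succ m ih => exact ih.trans (reach_soc hmul _)
  obtain ⟨k, F, h0, hk, hF⟩ := exists_chain (h n)
  refine ⟨k, F, ?_, ?_, fun i hi => (hF i hi).1, fun i hi => (hF i hi).2⟩
  · rw [h0]; rfl
  · rw [hk, socI_carrier, hsoc]

end SkewBrace
end
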